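/- (Surrogate approximation lemma from the proof of Theorem 8) Let β ≥ 0 be a real and k ∈ ℕ. Suppose S_β ⊆ V with |S_β| ≤ k satisfies Σ_{y ⊆ E} w(y)·min(β, f(S_β, y, A')) ≥ (1 − 1/e) · Σ_{y ⊆ E} w(y)·min(β, f(S', y, A')) for every S' ⊆ V with |S'| ≤ k. Then for every S' ⊆ V with |S'| ≤ k: Σ_{y ⊆ E} w(y)·min(β, m_D(S', y)) ≤ (1 + 2e/(e − 1)) · Σ_{y ⊆ E} w(y)·min(β, m_D(S_β, y)). -/

import Mathlib

/-!
For each scenario the margin change is sandwiched by the surrogate, `f ≤ m_D ≤ 2 f` with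
`f = f(S, y, A')`. The lower bound takes `c` to be a candidate of `J` with the most first-choice
voters; the upper bound uses `A' ∩ C_c ⊆ A'` and `|B_c| ≤ max |B_{c'}|`. Since
`min β (2 f) ≤ 2 min β f`, averaging over scenarios bounds the value of `S'` by twice its surrogate
value, hence by `2e/(e - 1)` times the surrogate value of `S_β`, which is at most `2e/(e - 1)`
times the value of `S_β`. The extra summand `1` in the factor is slack, as that value is
nonnegative.
-/

open Finset

attribute [local instance] Classical.propDecidable

/-- Number of nodes of `A` reachable from seed set `S` in scenario `y`. -/
noncomputable def reachCount {V : Type*} (y : Finset (V × V)) (S A : Finset V) : ℕ :=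
  (A.filter (fun v => ∃ s ∈ S, Relation.ReflTransGen (fun a b => (a, b) ∈ y) s v)).card

/-- Probability of the live-graph scenario `y ⊆ E` under edge probabilities `p`. -/
noncomputable def sceneWeight {V : Type*} (E : Finset (V × V)) (p : V × V → ℝ)
    (y : Finset (V × V)) : ℝ :=
  (∏ e ∈ y, p e) * (∏ e ∈ E \ y, (1 - p e))

/-- Voters whose second choice is `c`. -/
noncomputable def secondFor {V C : Type*} [Fintype V] (π₂ : V → C) (c : C) : Finset V :=
  Finset.univ.filter (fun v => π₂ v = c)

/-- Voters whose first choice is `c`. -/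
noncomputable def firstFor {V C : Type*} [Fintype V] (π₁ : V → C) (c : C) : Finset V :=
  Finset.univ.filter (fun v => π₁ v = c)

/-- Destructive change in margin in scenario `y` under seed set `S`:
`m_D(S, y) = f(S, y, A') + max_{c ∈ J} ( f(S, y, A' ∩ C_c) + |B_c| − max_{c' ∈ J} |B_{c'}| )`,
where `A' = {v : π₁ v = c*}`, `B_c = {v : π₁ v = c}` and `C_c = {v : π₂ v = c}`. -/
noncomputable def mD {V C : Type*} [Fintype V] (J : Finset C) (hJ : J.Nonempty)
    (π₁ π₂ : V → C) (cstar : C) (S : Finset V) (y : Finset (V × V)) : ℝ :=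
  (reachCount y S (firstFor π₁ cstar) : ℝ) +
    J.sup' hJ (fun c =>
      (reachCount y S (firstFor π₁ cstar ∩ secondFor π₂ c) : ℝ) +
        ((firstFor π₁ c).card : ℝ) - J.sup' hJ (fun c' => ((firstFor π₁ c').card : ℝ)))

theorem reachCount_mono {V : Type*} (y : Finset (V × V)) (S : Finset V) {A B : Finset V}
    (h : A ⊆ B) : reachCount y S A ≤ reachCount y S B :=
  Finset.card_le_card (Finset.filter_subset_filter _ h)

theorem sceneWeight_nonneg {V : Type*} (E : Finset (V × V)) (p : V × V → ℝ)
    (hp : ∀ e ∈ E, 0 ≤ p e ∧ p e ≤ 1) (y : Finset (V × V)) (hy : y ⊆ E) :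
    0 ≤ sceneWeight E p y :=
  mul_nonneg (Finset.prod_nonneg fun e he => (hp e (hy he)).1)
    (Finset.prod_nonneg fun e he => sub_nonneg.2 (hp e (Finset.mem_sdiff.1 he).1).2)

theorem reachCount_le_mD {V C : Type*} [Fintype V] (J : Finset C) (hJ : J.Nonempty)
    (π₁ π₂ : V → C) (cstar : C) (S : Finset V) (y : Finset (V × V)) :
    (reachCount y S (firstFor π₁ cstar) : ℝ) ≤ mD J hJ π₁ π₂ cstar S y := by
  obtain ⟨c, hc, hmax⟩ := J.exists_mem_eq_sup' hJ (fun c' => ((firstFor π₁ c').card : ℝ))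
  refine le_add_of_nonneg_right (le_trans ?_ (Finset.le_sup' _ hc))
  rw [hmax, add_sub_cancel_right]
  positivity

theorem mD_le_two_mul_reachCount {V C : Type*} [Fintype V] (J : Finset C) (hJ : J.Nonempty)
    (π₁ π₂ : V → C) (cstar : C) (S : Finset V) (y : Finset (V × V)) :
    mD J hJ π₁ π₂ cstar S y ≤ 2 * (reachCount y S (firstFor π₁ cstar) : ℝ) := by
  rw [two_mul]
  refine add_le_add le_rfl (Finset.sup'_le hJ _ fun c hc => ?_)
  have hmono : (reachCount y S (firstFor π₁ cstar ∩ secondFor π₂ c) : ℝ) ≤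
      reachCount y S (firstFor π₁ cstar) :=
    Nat.cast_le.2 (reachCount_mono y S Finset.inter_subset_left)
  have hmax := Finset.le_sup' (fun c' => ((firstFor π₁ c').card : ℝ)) hc
  linarith

/-- surrogate approximation lemma from the proof of Theorem 8: if `S_β`
(of size at most `k`) is a `(1 − 1/e)`-approximate maximizer of the truncated surrogate
`Σ_{y ⊆ E} w(y)·min(β, f(S, y, A'))` with `A' = {v : π₁ v = c*}` and `β ≥ 0`, then for
every `S'` of size at most `k`,
`Σ_y w(y)·min(β, m_D(S', y)) ≤ (1 + 2e/(e − 1)) · Σ_y w(y)·min(β, m_D(S_β, y))`. -/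
theorem mD_surrogate_approx {V C : Type*} [Fintype V]
    (E : Finset (V × V)) (p : V × V → ℝ) (hp : ∀ e ∈ E, 0 ≤ p e ∧ p e ≤ 1)
    (J : Finset C) (hJ : J.Nonempty) (π₁ π₂ : V → C) (cstar : C)
    (hdist : ∀ v, π₁ v ≠ π₂ v)
    (β : ℝ) (hβ : 0 ≤ β) (k : ℕ)
    (Sβ : Finset V) (hSβ : Sβ.card ≤ k)
    (hgreedy : ∀ S' : Finset V, S'.card ≤ k →
      (1 - 1 / Real.exp 1) *
          ∑ y ∈ E.powerset, sceneWeight E p y * min β (reachCount y S' (firstFor π₁ cstar) : ℝ) ≤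
        ∑ y ∈ E.powerset, sceneWeight E p y * min β (reachCount y Sβ (firstFor π₁ cstar) : ℝ)) :
    ∀ S' : Finset V, S'.card ≤ k →
      ∑ y ∈ E.powerset, sceneWeight E p y * min β (mD J hJ π₁ π₂ cstar S' y) ≤
        (1 + 2 * Real.exp 1 / (Real.exp 1 - 1)) *
          ∑ y ∈ E.powerset, sceneWeight E p y * min β (mD J hJ π₁ π₂ cstar Sβ y) := by
  intro S' hS'
  have hw : ∀ y ∈ E.powerset, 0 ≤ sceneWeight E p y := fun y hy =>
    sceneWeight_nonneg E p hp y (Finset.mem_powerset.1 hy)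
  have hupper : ∑ y ∈ E.powerset, sceneWeight E p y * min β (mD J hJ π₁ π₂ cstar S' y) ≤
      2 * ∑ y ∈ E.powerset,
        sceneWeight E p y * min β (reachCount y S' (firstFor π₁ cstar) : ℝ) := by
    rw [Finset.mul_sum]
    refine Finset.sum_le_sum fun y hy => ?_
    rw [mul_left_comm]
    refine mul_le_mul_of_nonneg_left ?_ (hw y hy)
    rw [mul_min_of_nonneg _ _ zero_le_two]
    exact min_le_min (by linarith) (mD_le_two_mul_reachCount J hJ π₁ π₂ cstar S' y)
  have hlower : ∑ y ∈ E.powerset,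
        sceneWeight E p y * min β (reachCount y Sβ (firstFor π₁ cstar) : ℝ) ≤
      ∑ y ∈ E.powerset, sceneWeight E p y * min β (mD J hJ π₁ π₂ cstar Sβ y) :=
    Finset.sum_le_sum fun y hy => mul_le_mul_of_nonneg_left
      (min_le_min le_rfl (reachCount_le_mD J hJ π₁ π₂ cstar Sβ y)) (hw y hy)
  have hnonneg : 0 ≤ ∑ y ∈ E.powerset,
      sceneWeight E p y * min β (reachCount y Sβ (firstFor π₁ cstar) : ℝ) :=
    Finset.sum_nonneg fun y hy => mul_nonneg (hw y hy) (le_min hβ (Nat.cast_nonneg _))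
  have happrox := (hgreedy S' hS').trans hlower
  have hM := hnonneg.trans hlower
  have he : 0 < Real.exp 1 - 1 := sub_pos.2 (Real.one_lt_exp_iff.2 one_pos)
  have he0 : Real.exp 1 ≠ 0 := (Real.exp_pos 1).ne'
  generalize ∑ y ∈ E.powerset, sceneWeight E p y * min β (mD J hJ π₁ π₂ cstar Sβ y) = M at *
  generalize ∑ y ∈ E.powerset,
    sceneWeight E p y * min β (reachCount y S' (firstFor π₁ cstar) : ℝ) = F at *
  -- `2e/(e - 1)` is twice the inverse of `1 - 1/e`
  have hF : 2 * F ≤ 2 * Real.exp 1 / (Real.exp 1 - 1) * M := by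
    calc 2 * F = 2 * Real.exp 1 / (Real.exp 1 - 1) * ((1 - 1 / Real.exp 1) * F) := by
          field_simp
      _ ≤ _ := mul_le_mul_of_nonneg_left happrox (by positivity)
  linarith
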